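/- arXiv:2501.10076 — 3 statements merged into one kernel-verified Lean document; each statement's English description precedes it below -/
import Mathlib

section
/- For any parameters 0 < t_0 < t_1 < ⋯ < t_{n-1}, the Bessel collocation matrix M = (B_{j-1}(t_{i-1}))_{1≤i,j≤n} is strictly totally positive: all its minors are positive. -/
/-- The Bessel polynomial `B_m` evaluated at `x`. -/
noncomputable def besselPoly (m : ℕ) (x : ℝ) : ℝ :=
  ∑ k ∈ Finset.range (m + 1),
    ((m + k).factorial : ℝ) / (2 ^ k * (m - k).factorial * k.factorial) * x ^ k

open Finset in
/-- A nonzero real polynomial has fewer sign variations than nonzero coefficients. -/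
theorem signVariations_lt_card_support (P : Polynomial ℝ) (hP : P ≠ 0) :
    P.signVariations < #P.support := by
  induction h : #P.support generalizing P with
  | zero => simp_all
  | succ n ih =>
    by_cases hE : P.eraseLead = 0
    · have hmon := P.eraseLead_add_monomial_natDegree_leadingCoeff
      rw [hE, zero_add] at hmon
      rw [← hmon, Polynomial.signVariations_monomial]
      omega
    · have hcard := ih P.eraseLead hE (Polynomial.card_support_eraseLead' h)
      rw [Polynomial.signVariations_eq_eraseLead_add_ite hP]
      split_ifs <;> omega

/-- Generalized Vandermonde matrices with distinct positive nodes are nonsingular. -/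
theorem det_pow_ne_zero {k : ℕ} (t : Fin k → ℝ) (c : Fin k → ℕ) (hpos : ∀ i, 0 < t i)
    (ht : StrictMono t) (hc : StrictMono c) :
    (Matrix.of fun i j => t i ^ c j).det ≠ 0 := by
  intro hdet
  obtain ⟨v, hv, hmul⟩ := Matrix.exists_mulVec_eq_zero_iff.mpr hdet
  set P : Polynomial ℝ := ∑ j, Polynomial.monomial (c j) (v j) with hPdef
  have hcoeff (j : Fin k) : P.coeff (c j) = v j := by
    simp [hPdef, Polynomial.coeff_monomial, hc.injective.eq_iff]
  have hP : P ≠ 0 := by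
    rintro h0
    exact hv (funext fun j => by rw [← hcoeff j, h0]; simp)
  have hsupp : P.support ⊆ Finset.univ.image c := by
    intro m hm
    by_contra hne
    refine Polynomial.mem_support_iff.mp hm ?_
    simp only [Finset.mem_image, Finset.mem_univ, true_and, not_exists] at hne
    simp [hPdef, Polynomial.coeff_monomial, hne]
  have hcard : P.support.card ≤ k :=
    (Finset.card_le_card hsupp).trans (Finset.card_image_le.trans (by simp))
  have hroot (i : Fin k) : P.IsRoot (t i) := by
    have := congrFun hmul i
    simp only [Matrix.mulVec, dotProduct, Matrix.of_apply, Pi.zero_apply] at this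
    simp only [hPdef, Polynomial.IsRoot, Polynomial.eval_finsetSum, Polynomial.eval_monomial]
    rw [← this]
    exact Finset.sum_congr rfl fun j _ => mul_comm _ _
  have hle : (Finset.univ.image t).val ≤ P.roots.filter (0 < ·) := by
    rw [Multiset.le_iff_subset (Finset.nodup _)]
    intro x hx
    obtain ⟨i, -, rfl⟩ := Finset.mem_image.mp (Finset.mem_val.mp hx)
    exact Multiset.mem_filter.mpr ⟨(Polynomial.mem_roots hP).mpr (hroot i), hpos i⟩
  have hk := Multiset.card_le_card hle
  rw [← Multiset.countP_eq_card_filter, Finset.card_val,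
    Finset.card_image_of_injective _ ht.injective, Finset.card_fin] at hk
  have := Polynomial.roots_countP_pos_le_signVariations P
  have := signVariations_lt_card_support P hP
  omega

/-- Generalized Vandermonde determinants with increasing positive nodes and increasing exponents
are positive: deform the nodes linearly to `2 ^ i`, where the transpose is a Vandermonde matrix. -/
theorem det_pow_pos {k : ℕ} (t : Fin k → ℝ) (c : Fin k → ℕ) (hpos : ∀ i, 0 < t i)
    (ht : StrictMono t) (hc : StrictMono c) :
    0 < (Matrix.of fun i j => t i ^ c j).det := by
  set s : ℝ → Fin k → ℝ := fun l i => (1 - l) * t i + l * 2 ^ (i : ℕ) with hs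
  set D : ℝ → ℝ := fun l => (Matrix.of fun i j => s l i ^ c j).det with hD
  have hcont : Continuous D := by
    refine Continuous.matrix_det (continuous_matrix fun i j => ?_)
    simp only [hs, Matrix.of_apply]
    fun_prop
  have hne (l : ℝ) (hl : l ∈ Set.Icc (0 : ℝ) 1) : D l ≠ 0 := by
    obtain ⟨h0, h1⟩ := hl
    have key (a b a' b' : ℝ) (ha : a < a') (hb : b < b') :
        (1 - l) * a + l * b < (1 - l) * a' + l * b' := by
      rcases h0.eq_or_lt with rfl | h0
      · linarith
      · nlinarith [mul_le_mul_of_nonneg_left ha.le (sub_nonneg.mpr h1),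
          mul_lt_mul_of_pos_left hb h0]
    refine det_pow_ne_zero _ c (fun i => ?_) (fun i j hij => ?_) hc
    · simpa [hs] using key 0 0 (t i) (2 ^ (i : ℕ)) (hpos i) (by positivity)
    · exact key _ _ _ _ (ht hij) (pow_lt_pow_right₀ one_lt_two hij)
  have hone : 0 < D 1 := by
    have : D 1 = (Matrix.vandermonde fun j => (2 : ℝ) ^ c j).det := by
      rw [← Matrix.det_transpose]
      simp only [hD, hs]
      congr 1
      ext i j
      simp [Matrix.vandermonde_apply, ← pow_mul, mul_comm]
    rw [this, Matrix.det_vandermonde]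
    refine Finset.prod_pos fun i _ => Finset.prod_pos fun j hj => sub_pos.mpr ?_
    exact pow_lt_pow_right₀ one_lt_two (hc (Finset.mem_Ioi.mp hj))
  have hzero : 0 < D 0 := by
    by_contra! hneg
    obtain ⟨l, hl, h0⟩ := intermediate_value_Icc zero_le_one hcont.continuousOn ⟨hneg, hone.le⟩
    exact hne l hl h0
  simpa [hD, hs] using hzero

/-- All minors of the collocation matrices of `G 0, …, G N` at increasing positive nodes are
positive. -/
def PositiveCollocation (N : ℕ) (G : ℕ → ℝ → ℝ) : Prop :=
  ∀ (k : ℕ) (t : Fin k → ℝ) (c : Fin k → ℕ), (∀ i, 0 < t i) → StrictMono t → StrictMono c →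
    (∀ j, c j ≤ N) → 0 < (Matrix.of fun i j => G (c j) (t i)).det

theorem PositiveCollocation.congr {N : ℕ} {F G : ℕ → ℝ → ℝ} (hF : PositiveCollocation N F)
    (h : ∀ j ≤ N, F j = G j) : PositiveCollocation N G := by
  intro k t c hpos ht hc hN
  have := hF k t c hpos ht hc hN
  simpa only [h _ (hN _)] using this

/-- Adding a nonnegative multiple of a function to a positive multiple of its successor preserves
positivity of all collocation minors. -/
theorem PositiveCollocation.update_succ {N : ℕ} {G : ℕ → ℝ → ℝ} (hG : PositiveCollocation N G)
    (p : ℕ) {e d : ℝ} (he : 0 ≤ e) (hd : 0 < d) :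
    PositiveCollocation N
      (Function.update G (p + 1) fun x => e * G p x + d * G (p + 1) x) := by
  intro k t c hpos ht hc hN
  have hbase := hG k t c hpos ht hc hN
  by_cases hp : ∃ q, c q = p + 1
  swap
  · push Not at hp
    simpa only [Function.update_of_ne (hp _)] using hbase
  obtain ⟨q, hq⟩ := hp
  set A : Matrix (Fin k) (Fin k) ℝ := Matrix.of fun i j => G (c j) (t i) with hA
  have hsplit : (Matrix.of fun i j =>
      Function.update G (p + 1) (fun x => e * G p x + d * G (p + 1) x) (c j) (t i)) =
      A.updateCol q (e • (fun i => G p (t i)) + d • fun i => G (p + 1) (t i)) := by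
    ext i j
    by_cases hj : j = q
    · subst hj
      simp [hq]
    · have : c j ≠ p + 1 := fun h => hj (hc.injective (h.trans hq.symm))
      simp [hj, this, hA]
  have hself : A.updateCol q (fun i => G (p + 1) (t i)) = A := by
    ext i j
    by_cases hj : j = q
    · subst hj
      simp [hA, hq]
    · simp [hj]
  have hshift : A.updateCol q (fun i => G p (t i)) =
      Matrix.of fun i j => G (Function.update c q p j) (t i) := by
    ext i j
    by_cases hj : j = q
    · subst hj
      simp
    · simp [hj, hA]
  have hnonneg : 0 ≤ (A.updateCol q fun i => G p (t i)).det := by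
    rw [hshift]
    by_cases hp' : ∃ q', c q' = p
    · obtain ⟨q', hq'⟩ := hp'
      have hne : q' ≠ q := by
        rintro rfl
        omega
      refine (Matrix.det_zero_of_column_eq hne fun i => ?_).ge
      simp [hne, hq']
    · push Not at hp'
      refine (hG k t _ hpos ht ?_ fun j => ?_).le
      · intro i j hij
        have hcij := hc hij
        have := hp' i
        simp only [Function.update_apply]
        split_ifs with h1 h2 h2
        · omega
        · subst h1
          omega
        · subst h2
          omega
        · exact hcij
      · have := hN j
        have := hN q
        simp only [Function.update_apply]
        split_ifs <;> omega
  rw [hsplit, Matrix.det_updateCol_add, Matrix.det_updateCol_smul, Matrix.det_updateCol_smul, hself]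
  exact add_pos_of_nonneg_of_pos (mul_nonneg he hnonneg) (mul_pos hd hbase)

/-- Positivity of collocation minors passes from `F` to a family built by a two-term recursion
with nonnegative weight on the previous term and positive weight on `F`. -/
theorem PositiveCollocation.of_recursion {N : ℕ} {F G : ℕ → ℝ → ℝ} (hF : PositiveCollocation N F)
    (e d : ℕ → ℝ) (he : ∀ j, 0 ≤ e j) (hd : ∀ j, 0 < d j) (hzero : G 0 = F 0)
    (hsucc : ∀ j x, G (j + 1) x = e j * G j x + d j * F (j + 1) x) :
    PositiveCollocation N G := by
  have replace_initial (p : ℕ) :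
      PositiveCollocation N fun j => if j ≤ p then G j else F j := by
    induction p with
    | zero =>
      refine hF.congr fun j _ => ?_
      split_ifs with h
      · rw [Nat.le_zero.mp h, hzero]
      · rfl
    | succ p ih =>
      refine (ih.update_succ p (he p) (hd p)).congr fun j _ => ?_
      rcases lt_trichotomy j (p + 1) with h | rfl | h
      · simp [h.ne, h.le, Nat.le_of_lt_succ h]
      · ext x
        simp [hsucc]
      · simp [h.ne', show ¬ j ≤ p by omega, show ¬ j ≤ p + 1 by omega]
  exact (replace_initial N).congr fun j hj => by simp [hj]

/-- Generalized Bessel polynomials, defined by a recursion that shifts the parameter. -/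
noncomputable def generalizedBessel : ℕ → ℕ → ℝ → ℝ
  | _, 0, _ => 1
  | a, m + 1, x => generalizedBessel a m x +
      (2 * (m + 1) + a) / 2 * x * generalizedBessel (a + 1) m x

theorem generalizedBessel_eq_sum (a m : ℕ) (x : ℝ) :
    generalizedBessel a m x =
      ∑ k ∈ Finset.range (m + 1),
        (m.choose k : ℝ) * ((m + a + 1).ascFactorial k : ℝ) * (x / 2) ^ k := by
  induction m generalizing a with
  | zero => simp [generalizedBessel]
  | succ m ih =>
    have hext : ∑ k ∈ Finset.range (m + 1),
        (m.choose k : ℝ) * ((m + a + 1).ascFactorial k : ℝ) * (x / 2) ^ k =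
        ∑ k ∈ Finset.range (m + 2),
          (m.choose k : ℝ) * ((m + a + 1).ascFactorial k : ℝ) * (x / 2) ^ k := by
      rw [Finset.sum_range_succ _ (m + 1)]
      simp
    rw [generalizedBessel, ih, ih, hext, Finset.sum_range_succ' _ (m + 1),
      Finset.sum_range_succ' _ (m + 1), Finset.mul_sum, add_right_comm, ← Finset.sum_add_distrib]
    congr 1
    · refine Finset.sum_congr rfl fun k hk => ?_
      have hkm : k ≤ m := Nat.le_of_lt_succ (Finset.mem_range.mp hk)
      have hchoose : (m.choose (k + 1) : ℝ) * (k + 1) = m.choose k * (m - k) := by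
        have := Nat.choose_succ_right_eq m k
        rw [← Nat.cast_sub hkm]
        exact_mod_cast this
      have hasc : (m + a + 1).ascFactorial (k + 1) =
          (m + a + 1) * (m + 1 + a + 1).ascFactorial k := by
        rw [show m + 1 + a + 1 = m + a + 1 + 1 by ring, Nat.succ_ascFactorial,
          Nat.ascFactorial_succ]
      rw [hasc, Nat.ascFactorial_succ, Nat.choose_succ_succ,
        show m + (a + 1) + 1 = m + 1 + a + 1 by ring]
      push_cast
      linear_combination
        -((m + 1 + a + 1).ascFactorial k : ℝ) * (x / 2) ^ (k + 1) * hchoose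
    · simp

theorem generalizedBessel_zero_eq_besselPoly (m : ℕ) (x : ℝ) :
    generalizedBessel 0 m x = besselPoly m x := by
  rw [generalizedBessel_eq_sum, besselPoly]
  refine Finset.sum_congr rfl fun k hk => ?_
  have hkm : k ≤ m := Nat.le_of_lt_succ (Finset.mem_range.mp hk)
  have hasc : (m.factorial : ℝ) * ((m + 1).ascFactorial k : ℝ) = ((m + k).factorial : ℝ) := by
    exact_mod_cast Nat.factorial_mul_ascFactorial m k
  rw [Nat.cast_choose ℝ hkm, add_zero, ← hasc, div_pow]
  field_simp

/-- The families interpolating between the monomials and the Bessel polynomials have positive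
collocation minors. -/
theorem positiveCollocation_pow_mul_generalizedBessel (N i : ℕ) (hi : i ≤ N) :
    PositiveCollocation N fun j x =>
      x ^ min (N - i) j * generalizedBessel (N - i) (j - (N - i)) x := by
  induction i with
  | zero =>
    intro k t c hpos ht hc hN
    have := det_pow_pos t c hpos ht hc
    simpa [hN, Nat.sub_eq_zero_of_le, generalizedBessel] using this
  | succ i ih =>
    obtain ⟨s, hs⟩ : ∃ s, N - i = s + 1 := ⟨N - (i + 1), by omega⟩
    have hs' : N - (i + 1) = s := by omega
    have hprev := ih (by omega)
    rw [hs] at hprev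
    rw [hs']
    refine hprev.of_recursion (fun j => if j < s then 0 else 1)
      (fun j => if j < s then 1 else (2 * ((j - s : ℕ) + 1) + s) / 2)
      (fun j => by split_ifs <;> norm_num) (fun j => by split_ifs <;> positivity) ?_ fun j x => ?_
    · ext x
      simp [generalizedBessel]
    · by_cases hj : j < s
      · simp [hj, Nat.sub_eq_zero_of_le hj, generalizedBessel, hj.le]
      · obtain ⟨l, rfl⟩ := Nat.exists_eq_add_of_le (not_lt.mp hj)
        simp only [hj, if_false]
        rw [show s + l + 1 - s = l + 1 by omega, show s + l - s = l by omega,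
          show s + l + 1 - (s + 1) = l by omega, min_eq_left (by omega), min_eq_left (by omega),
          min_eq_left (by omega), generalizedBessel]
        ring

theorem bessel_collocation_STP (n : ℕ) (t : Fin n → ℝ)
    (hpos : ∀ i, 0 < t i) (hmono : StrictMono t) :
    let M : Matrix (Fin n) (Fin n) ℝ := fun i j => besselPoly j (t i)
    ∀ (k : ℕ) (r c : Fin k → Fin n), StrictMono r → StrictMono c →
      0 < (M.submatrix r c).det := by
  intro M k r c hr hc
  have hmain := positiveCollocation_pow_mul_generalizedBessel n n le_rfl k (t ∘ r)
    (fun j => (c j : ℕ)) (fun i => hpos _) (hmono.comp hr) (fun i j hij => hc hij)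
    (fun j => (c j).isLt.le)
  simp only [Nat.sub_self, Nat.zero_min, pow_zero, one_mul, Nat.sub_zero,
    generalizedBessel_zero_eq_besselPoly] at hmain
  exact hmain
end

section
/- All eigenvalues of a Bessel collocation matrix M = (B_{j-1}(t_{i-1}))_{1≤i,j≤n} with 0 < t_0 < ⋯ < t_{n-1} are real, positive, and pairwise distinct. -/
open Finset Matrix

/-- Multilinear expansion of a minor whose columns are nonnegative combinations of columns with
ordered supports. -/
theorem det_sum_pos_of_sorted_supports {ι : Type*} [LinearOrder ι] {k : ℕ}
    (G : Fin k → ι → ℝ) (hG : ∀ f : Fin k → ι, StrictMono f → 0 < (of fun a b => G a (f b)).det)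
    (T : Fin k → Finset ι) (w : Fin k → ι → ℝ) (hw : ∀ b, ∀ l ∈ T b, 0 ≤ w b l)
    (hT : ∀ b b', b < b' → ∀ l ∈ T b, ∀ l' ∈ T b', l ≤ l')
    (f₀ : Fin k → ι) (hf₀ : StrictMono f₀) (hf₀T : ∀ b, f₀ b ∈ T b)
    (hf₀w : ∀ b, 0 < w b (f₀ b)) :
    0 < (of fun a b => ∑ l ∈ T b, w b l * G a l).det := by
  have expand : (of fun a b => ∑ l ∈ T b, w b l * G a l).det =
      ∑ f ∈ Fintype.piFinset T, (∏ b, w b (f b)) * (of fun a b => G a (f b)).det := by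
    rw [← det_transpose]
    have h := (detRowAlternating (R := ℝ) (n := Fin k)).toMultilinearMap.map_sum_finset
      (fun b l => fun a => w b l * G a l) T
    have e : (of fun a b => ∑ l ∈ T b, w b l * G a l)ᵀ =
        fun b => ∑ l ∈ T b, fun a => w b l * G a l := by
      ext b a
      simp [Finset.sum_apply]
    rw [e]
    refine h.trans (Finset.sum_congr rfl fun f _ => ?_)
    rw [← det_mul_row, ← det_transpose]
    rfl
  rw [expand]
  refine Finset.sum_pos' (fun f hf => ?_) ⟨f₀, Fintype.mem_piFinset.2 hf₀T,
    mul_pos (Finset.prod_pos fun b _ => hf₀w b) (hG f₀ hf₀)⟩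
  rw [Fintype.mem_piFinset] at hf
  refine mul_nonneg (Finset.prod_nonneg fun b _ => hw b _ (hf b)) ?_
  have hmono : Monotone f := fun b b' hb => by
    rcases hb.eq_or_lt with rfl | hlt
    · exact le_rfl
    · exact hT b b' hlt _ (hf b) _ (hf b')
  by_cases hinj : Function.Injective f
  · exact (hG f (hmono.strictMono_of_injective hinj)).le
  · obtain ⟨b, b', hbb, hne⟩ := Function.not_injective_iff.1 hinj
    refine (det_zero_of_column_eq hne fun a => ?_).ge
    simp [hbb]

theorem det_eq_mul_det_sub_of_last_col_const {R : Type*} [CommRing R] {k : ℕ}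
    (G : Matrix (Fin (k + 1)) (Fin (k + 1)) R) (c : R) (hc : ∀ i, G i (Fin.last k) = c) :
    G.det = c * (of fun i j : Fin k =>
      G i.castSucc j.castSucc - G i.succ j.castSucc).det := by
  let H : Matrix (Fin (k + 1)) (Fin (k + 1)) R :=
    of fun i j => Fin.cases (G 0 j) (fun i' => G i'.succ j - G i'.castSucc j) i
  have hdet : G.det = H.det :=
    det_eq_of_forall_row_eq_smul_add_pred (fun _ => 1) (fun j => by simp [H])
      (fun i j => by simp [H])
  rw [hdet, det_succ_column H (Fin.last k), Fin.sum_univ_succ]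
  have hz : ∀ i : Fin k, H i.succ (Fin.last k) = 0 := fun i => by simp [H, hc]
  have hsub : H.submatrix (Fin.succAbove 0) (Fin.succAbove (Fin.last k)) =
      -(of fun i j : Fin k => G i.castSucc j.castSucc - G i.succ j.castSucc) := by
    ext i j
    simp [H]
  have h0 : H 0 (Fin.last k) = c := by simp [H, hc]
  simp only [hz, hsub, h0, det_neg, Fintype.card_fin]
  simp only [Fin.val_zero, Fin.val_last, zero_add, mul_zero, zero_mul, Finset.sum_const_zero,
    add_zero]
  have : ((-1 : R) ^ k) * (-1) ^ k = 1 := by rw [← mul_pow]; simp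
  linear_combination (c * (of fun i j : Fin k =>
      G i.castSucc j.castSucc - G i.succ j.castSucc).det) * this

theorem pow_sub_pow_mul_pow_eq_sum {R : Type*} [CommRing R] (x y : R) {p q : ℕ} (hpq : p ≤ q) :
    y ^ q - x ^ (q - p) * y ^ p = (y - x) * ∑ l ∈ Ico p q, x ^ (q - 1 - l) * y ^ l := by
  obtain ⟨d, rfl⟩ := Nat.exists_eq_add_of_le hpq
  rw [Finset.sum_Ico_eq_sum_range]
  have h := geom_sum₂_mul y x d
  simp only [Nat.add_sub_cancel_left]
  have e : ∑ i ∈ range d, x ^ (p + d - 1 - (p + i)) * y ^ (p + i) =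
      y ^ p * ∑ i ∈ range d, y ^ i * x ^ (d - 1 - i) := by
    rw [Finset.mul_sum]
    refine Finset.sum_congr rfl fun i _ => ?_
    rw [show p + d - 1 - (p + i) = d - 1 - i by omega]
    ring
  rw [e]
  linear_combination (-(y ^ p)) * h

theorem det_generalized_vandermonde_pos {k : ℕ} (s : Fin k → ℝ) (hs : ∀ i, 0 < s i)
    (hmono : StrictMono s) (J : Fin k → ℕ) (hJ : StrictMono J) :
    0 < (of fun a b => s a ^ J b).det := by
  induction k with
  | zero => simp
  | succ k ih =>
    let H : Matrix (Fin (k + 1)) (Fin (k + 1)) ℝ := of fun a b =>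
      Fin.cases (s a ^ J 0)
        (fun b' => s a ^ J b'.succ - s 0 ^ (J b'.succ - J b'.castSucc) * s a ^ J b'.castSucc) b
    have hdet : (of fun a b => s a ^ J b).det = H.det :=
      det_eq_of_forall_col_eq_smul_add_pred (fun b => s 0 ^ (J b.succ - J b.castSucc))
        (fun a => by simp [H]) (fun a b => by simp [H])
    have hle : ∀ b : Fin k, J b.castSucc < J b.succ := fun b => hJ b.castSucc_lt_succ
    rw [hdet, det_succ_row_zero, Fin.sum_univ_succ]
    have hz : ∀ b : Fin k, H 0 b.succ = 0 := fun b => by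
      simp [H, ← pow_add, Nat.sub_add_cancel (hle b).le]
    have h0 : H 0 0 = s 0 ^ J 0 := by simp [H]
    have hsub : H.submatrix Fin.succ (Fin.succAbove 0) = of fun a b : Fin k =>
        (s a.succ - s 0) * (of fun (a b : Fin k) => ∑ l ∈ Ico (J b.castSucc) (J b.succ),
          s 0 ^ (J b.succ - 1 - l) * s a.succ ^ l) a b := by
      ext a b
      simp [H, pow_sub_pow_mul_pow_eq_sum _ _ (hle b).le]
    simp only [hz, h0, hsub, det_mul_column]
    simp only [Fin.val_zero, pow_zero, one_mul, mul_zero, zero_mul, Finset.sum_const_zero,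
      add_zero]
    refine mul_pos (pow_pos (hs 0) _) (mul_pos (Finset.prod_pos fun a _ =>
      sub_pos.2 (hmono a.succ_pos)) ?_)
    refine det_sum_pos_of_sorted_supports (fun (a : Fin k) l => s a.succ ^ l)
      (fun f hf => ih (fun a => s a.succ) (fun a => hs _)
        (fun a b hab => hmono (Fin.succ_lt_succ_iff.2 hab)) f hf)
      (fun b => Ico (J b.castSucc) (J b.succ)) (fun b l => s 0 ^ (J b.succ - 1 - l))
      (fun b l _ => (pow_pos (hs 0) _).le) ?_ (fun b => J b.castSucc)
      (fun a b hab => hJ (Fin.castSucc_lt_castSucc_iff.2 hab))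
      (fun b => Finset.mem_Ico.2 ⟨le_rfl, hle b⟩) (fun b => pow_pos (hs 0) _)
    intro b b' hb l hl l' hl'
    rw [Finset.mem_Ico] at hl hl'
    have : J b.succ ≤ J b'.castSucc := hJ.monotone (Fin.succ_le_castSucc_iff.2 hb)
    omega

/-- A positive square matrix has a positive eigenvalue with a positive eigenvector. -/
theorem exists_pos_eigenvector_of_pos {ι : Type*} [Fintype ι] [Nonempty ι]
    (A : Matrix ι ι ℝ) (hA : ∀ i j, 0 < A i j) :
    ∃ (r : ℝ) (u : ι → ℝ), 0 < r ∧ (∀ i, 0 < u i) ∧ A *ᵥ u = r • u := by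
  classical
  have hpos : ∀ z : ι → ℝ, (∀ i, 0 ≤ z i) → z ≠ 0 → ∀ i, 0 < (A *ᵥ z) i := by
    intro z hz hne i
    obtain ⟨j, hj⟩ := Function.ne_iff.1 hne
    exact Finset.sum_pos' (fun j _ => mul_nonneg (hA i j).le (hz j))
      ⟨j, Finset.mem_univ j, mul_pos (hA i j) (lt_of_le_of_ne (hz j) (Ne.symm hj))⟩
  let C : ℝ := ∑ i, ∑ j, A i j
  let K : Set (ℝ × (ι → ℝ)) := (Set.Icc 0 C ×ˢ stdSimplex ℝ ι) ∩
    {p | ∀ i, p.1 * p.2 i ≤ (A *ᵥ p.2) i}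
  have hbound : ∀ (r : ℝ) (x : ι → ℝ), x ∈ stdSimplex ℝ ι →
      (∀ i, r * x i ≤ (A *ᵥ x) i) → r ≤ C := by
    intro r x hx h
    calc r = ∑ i, r * x i := by rw [← Finset.mul_sum, hx.2, mul_one]
      _ ≤ ∑ i, (A *ᵥ x) i := Finset.sum_le_sum fun i _ => h i
      _ ≤ C := Finset.sum_le_sum fun i _ => Finset.sum_le_sum fun j _ =>
          mul_le_of_le_one_right (hA i j).le
            (hx.2 ▸ Finset.single_le_sum (fun l _ => hx.1 l) (Finset.mem_univ j))
  have hK : IsCompact K := by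
    refine (isCompact_Icc.prod (isCompact_stdSimplex ℝ ι)).inter_right ?_
    simp only [Set.ofPred_forall]
    refine isClosed_iInter fun i => isClosed_le (by fun_prop) ?_
    simp only [mulVec, dotProduct]
    fun_prop
  have hKne : K.Nonempty := by
    obtain ⟨i₀⟩ := ‹Nonempty ι›
    have hs := single_mem_stdSimplex ℝ i₀
    refine ⟨(0, Pi.single i₀ 1), ⟨⟨⟨le_rfl, ?_⟩, hs⟩, fun i => ?_⟩⟩
    · exact Finset.sum_nonneg fun i _ => Finset.sum_nonneg fun j _ => (hA i j).le
    · simpa using (hA i i₀).le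
  obtain ⟨⟨r, x⟩, ⟨⟨⟨hr0, -⟩, hx⟩, hrx⟩, hmax⟩ := hK.exists_isMaxOn hKne continuous_fst.continuousOn
  simp only at hr0 hx hrx
  have hx0 : x ≠ 0 := by
    rintro rfl
    simpa using hx.2
  have hy : ∀ i, 0 < (A *ᵥ x) i := hpos x hx.1 hx0
  have heq : A *ᵥ x = r • x := by
    by_contra hne
    have hz := hpos (A *ᵥ x - r • x) (fun i => by simpa using hrx i) (sub_ne_zero.2 hne)
    obtain ⟨i₀, hi₀⟩ := Finite.exists_min
      fun i => (A *ᵥ (A *ᵥ x - r • x)) i / (A *ᵥ x) i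
    set ε := (A *ᵥ (A *ᵥ x - r • x)) i₀ / (A *ᵥ x) i₀
    have hε : 0 < ε := div_pos (hz _) (hy _)
    have hS : 0 < ∑ i, (A *ᵥ x) i := Finset.sum_pos (fun i _ => hy i) Finset.univ_nonempty
    let y := (∑ i, (A *ᵥ x) i)⁻¹ • (A *ᵥ x)
    have hymem : y ∈ stdSimplex ℝ ι := by
      refine ⟨fun i => mul_nonneg (inv_pos.2 hS).le (hy i).le, ?_⟩
      simp only [y, Pi.smul_apply, smul_eq_mul, ← Finset.mul_sum]
      exact inv_mul_cancel₀ hS.ne'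
    have hyle : ∀ i, (r + ε) * y i ≤ (A *ᵥ y) i := by
      intro i
      have h1 : ε * (A *ᵥ x) i ≤ (A *ᵥ (A *ᵥ x - r • x)) i := (le_div_iff₀ (hy i)).1 (hi₀ i)
      rw [mulVec_sub, mulVec_smul] at h1
      simp only [Pi.sub_apply, Pi.smul_apply, smul_eq_mul] at h1
      simp only [y, mulVec_smul, Pi.smul_apply, smul_eq_mul]
      rw [mul_left_comm]
      exact mul_le_mul_of_nonneg_left (by linarith) (inv_pos.2 hS).le
    have := hmax (show (r + ε, y) ∈ K from
      ⟨⟨⟨by positivity, hbound _ _ hymem hyle⟩, hymem⟩, hyle⟩)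
    simp only [Set.mem_ofPred_eq] at this
    linarith
  have hrxpos : ∀ i, 0 < r * x i := fun i => by simpa [heq] using hy i
  have hr : 0 < r := lt_of_le_of_ne hr0 fun h => by
    obtain ⟨i₀⟩ := ‹Nonempty ι›
    simpa [← h] using hrxpos i₀
  exact ⟨r, x, hr, fun i => pos_of_mul_pos_right (hrxpos i) hr0, heq⟩

theorem det_partial_sums {R : Type*} [CommRing R] {k m : ℕ} (A : Fin k → Fin m → R)
    (J : Fin k → Fin m) (hJ : StrictMono J) :
    (of fun a b => ∑ l ∈ Iic (J b), A a l).det =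
      (of fun a b => ∑ l with l ≤ J b ∧ ∀ c < b, J c < l, A a l).det := by
  cases k with
  | zero => simp
  | succ k =>
    refine det_eq_of_forall_col_eq_smul_add_pred (fun _ => 1) (fun a => ?_) (fun a b => ?_)
    · simp only [of_apply, Fin.not_lt_zero, false_imp_iff, implies_true, and_true]
      congr 1
      ext l
      simp
    · simp only [of_apply, one_mul]
      have hlt := hJ b.castSucc_lt_succ
      rw [add_comm, ← Finset.sum_union]
      · congr 1
        ext l
        simp only [mem_Iic, mem_union, mem_filter, mem_univ, true_and]
        constructor
        · intro hl
          refine (le_or_gt l (J b.castSucc)).imp id fun h => ⟨hl, fun c hc => ?_⟩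
          exact (hJ.monotone (Fin.le_castSucc_iff.2 hc)).trans_lt h
        · rintro (h | h)
          · exact h.trans hlt.le
          · exact h.1
      · rw [Finset.disjoint_left]
        intro l hl hl'
        simp only [mem_Iic, mem_filter, mem_univ, true_and] at hl hl'
        exact absurd (hl'.2 _ b.castSucc_lt_succ) hl.not_gt

/-- All minors on consecutive rows are positive. -/
def ConsecutiveRowMinorsPos {n : ℕ} (A : Matrix (Fin n) (Fin n) ℝ) : Prop :=
  ∀ (k i : ℕ) (r J : Fin k → Fin n), (∀ a, (r a : ℕ) = i + a) → StrictMono J →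
    0 < (A.submatrix r J).det

theorem ConsecutiveRowMinorsPos.entry_pos {n : ℕ} {A : Matrix (Fin n) (Fin n) ℝ}
    (hA : ConsecutiveRowMinorsPos A) (i j : Fin n) : 0 < A i j := by
  simpa using hA 1 i (fun _ => i) (fun _ => j) (fun a => by simp)
    (Subsingleton.strictMono _)

/-- Conjugation of `A` by the diagonal matrix with diagonal `u`. -/
noncomputable def diagConj {n : ℕ} (A : Matrix (Fin n) (Fin n) ℝ) (u : Fin n → ℝ) :
    Matrix (Fin n) (Fin n) ℝ :=
  of fun i j => (u i)⁻¹ * (u j * A i j)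

theorem ConsecutiveRowMinorsPos.diagConj {n : ℕ} {A : Matrix (Fin n) (Fin n) ℝ}
    (hA : ConsecutiveRowMinorsPos A) {u : Fin n → ℝ} (hu : ∀ i, 0 < u i) :
    ConsecutiveRowMinorsPos (diagConj A u) := by
  intro k i r J hr hJ
  have e : (_root_.diagConj A u).submatrix r J = of fun a b => (u (r a))⁻¹ *
      (of fun a b => u (J b) * (A.submatrix r J) a b) a b := rfl
  rw [e, det_mul_column (fun a => (u (r a))⁻¹), det_mul_row (fun b => u (J b))]
  exact mul_pos (Finset.prod_pos fun a _ => inv_pos.2 (hu _))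
    (mul_pos (Finset.prod_pos fun b _ => hu _) (hA k i r J hr hJ))

theorem charpoly_diagConj {n : ℕ} (A : Matrix (Fin n) (Fin n) ℝ) {u : Fin n → ℝ}
    (hu : ∀ i, 0 < u i) : (diagConj A u).charpoly = A.charpoly := by
  have e : diagConj A u = diagonal (fun i => (u i)⁻¹) * (A * diagonal u) := by
    ext i j
    simp [diagConj, mul_comm]
  have e' : diagonal u * diagonal (fun i => (u i)⁻¹) = 1 := by
    rw [diagonal_mul_diagonal, ← diagonal_one]
    congr 1
    ext i
    exact mul_inv_cancel₀ (hu i).ne'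
  rw [e, charpoly_mul_comm, Matrix.mul_assoc, e', Matrix.mul_one]

theorem sum_diagConj {n : ℕ} {A : Matrix (Fin n) (Fin n) ℝ} {u : Fin n → ℝ}
    (hu : ∀ i, 0 < u i) {c : ℝ} (h : A *ᵥ u = c • u) (i : Fin n) :
    ∑ j, diagConj A u i j = c := by
  have hi : ∑ j, A i j * u j = c * u i := congrFun h i
  simp only [diagConj, of_apply, ← Finset.mul_sum, mul_comm (u _) (A _ _), hi]
  field_simp [(hu i).ne']

/-- The action of a matrix with constant row sums on the quotient by the constant vector. -/
def rowSumDeflation {R : Type*} [CommRing R] {n : ℕ}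
    (A : Matrix (Fin (n + 1)) (Fin (n + 1)) R) : Matrix (Fin n) (Fin n) R :=
  of fun i j => ∑ l ∈ Iic j.castSucc, (A i.castSucc l - A i.succ l)

theorem det_eq_mul_det_rowSumDeflation {R : Type*} [CommRing R] {n : ℕ}
    (A : Matrix (Fin (n + 1)) (Fin (n + 1)) R) (c : R) (hc : ∀ i, ∑ j, A i j = c) :
    A.det = c * (rowSumDeflation A).det := by
  have h := det_partial_sums A id strictMono_id
  have e : (of fun a b => ∑ l with l ≤ id b ∧ ∀ c < b, id c < l, A a l) = A := by
    ext a b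
    have : ({l | l ≤ id b ∧ ∀ c < b, id c < l} : Finset (Fin (n + 1))) = {b} := by
      ext l
      simp only [id, mem_filter, mem_univ, true_and, mem_singleton]
      constructor
      · rintro ⟨h1, h2⟩
        by_contra hne
        exact lt_irrefl _ (h2 l (lt_of_le_of_ne h1 hne))
      · rintro rfl
        exact ⟨le_rfl, fun _ h => h⟩
    rw [of_apply, this, Finset.sum_singleton]
  rw [e] at h
  rw [← h, det_eq_mul_det_sub_of_last_col_const _ c]
  · simp [rowSumDeflation, Finset.sum_sub_distrib]
  · intro i
    simp only [of_apply, id, ← Fin.top_eq_last, Iic_top, hc]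

theorem charpoly_eq_mul_charpoly_rowSumDeflation {R : Type*} [CommRing R] {n : ℕ}
    (A : Matrix (Fin (n + 1)) (Fin (n + 1)) R) (c : R) (hc : ∀ i, ∑ j, A i j = c) :
    A.charpoly = (Polynomial.X - Polynomial.C c) * (rowSumDeflation A).charpoly := by
  rw [charpoly, det_eq_mul_det_rowSumDeflation A.charmatrix (Polynomial.X - Polynomial.C c),
    charpoly]
  · congr 2
    ext1 i j
    simp only [rowSumDeflation, of_apply, charmatrix_apply, Finset.sum_sub_distrib,
      diagonal_apply, Finset.sum_ite_eq, mem_Iic, map_sub, map_sum]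
    have : (i.succ ≤ j.castSucc) ↔ i < j := Fin.succ_le_castSucc_iff
    simp only [this, Fin.castSucc_le_castSucc_iff]
    rcases lt_trichotomy i j with h | rfl | h
    · simp [h, h.le, h.ne]
    · simp only [le_refl, lt_irrefl, if_true, if_false]
      ring
    · simp only [h.not_ge, h.not_gt, h.ne', if_false]
      ring
  · intro i
    simp [charmatrix_apply, diagonal_apply, Finset.sum_sub_distrib, ← map_sum, hc]

theorem ConsecutiveRowMinorsPos.rowSumDeflation {n : ℕ}
    {A : Matrix (Fin (n + 1)) (Fin (n + 1)) ℝ} (hA : ConsecutiveRowMinorsPos A) {c : ℝ}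
    (hc0 : 0 < c) (hc : ∀ i, ∑ j, A i j = c) :
    ConsecutiveRowMinorsPos (rowSumDeflation A) := by
  intro k i r J hr hJ
  cases k with
  | zero => simp
  | succ k =>
    have hik : i + k < n := by
      have h := hr (Fin.last k)
      have := (r (Fin.last k)).isLt
      simp only [Fin.val_last] at h
      omega
    let r' : Fin (k + 2) → Fin (n + 1) := fun a => ⟨i + a, by omega⟩
    let J' : Fin (k + 2) → Fin (n + 1) :=
      Fin.snoc (α := fun _ => Fin (n + 1)) (fun b => (J b).castSucc) (Fin.last n)
    have hJ'c : ∀ b : Fin (k + 1), J' b.castSucc = (J b).castSucc := fun b =>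
      Fin.snoc_castSucc (α := fun _ => Fin (n + 1)) _ _ b
    have hJ'l : J' (Fin.last (k + 1)) = Fin.last n :=
      Fin.snoc_last (α := fun _ => Fin (n + 1)) _ _
    have hJ' : StrictMono J' := by
      intro a b hab
      induction a using Fin.lastCases with
      | last => exact absurd hab (Fin.le_last b).not_gt
      | cast a =>
        induction b using Fin.lastCases with
        | last => rw [hJ'c, hJ'l]; exact Fin.castSucc_lt_last _
        | cast b =>
          rw [hJ'c, hJ'c, Fin.castSucc_lt_castSucc_iff]
          exact hJ (Fin.castSucc_lt_castSucc_iff.1 hab)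
    have hdet := det_eq_mul_det_sub_of_last_col_const
      (of fun a b => ∑ l ∈ Iic (J' b), A (r' a) l) c (fun a => by
        rw [of_apply, hJ'l, ← Fin.top_eq_last, Iic_top, hc])
    have hsub : (of fun a b : Fin (k + 1) =>
        (of fun a b => ∑ l ∈ Iic (J' b), A (r' a) l) a.castSucc b.castSucc -
        (of fun a b => ∑ l ∈ Iic (J' b), A (r' a) l) a.succ b.castSucc) =
        (_root_.rowSumDeflation A).submatrix r J := by
      ext a b
      have h1 : r' a.castSucc = (r a).castSucc := Fin.ext (by simp [r', hr])
      have h2 : r' a.succ = (r a).succ := Fin.ext (by simp [r', hr, add_assoc])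
      simp only [of_apply, submatrix_apply, _root_.rowSumDeflation, hJ'c, h1, h2,
        Finset.sum_sub_distrib]
    rw [hsub, det_partial_sums (fun a => A (r' a)) J' hJ'] at hdet
    refine pos_of_mul_pos_right (a := c) ?_ hc0.le
    rw [← hdet]
    have key := det_sum_pos_of_sorted_supports (fun a l => A (r' a) l)
      (fun f hf => hA (k + 2) i r' f (fun a => rfl) hf)
      (fun b => {l | l ≤ J' b ∧ ∀ c < b, J' c < l}) (fun _ _ => 1)
      (fun _ _ _ => zero_le_one) ?_ J' hJ' (fun b => by
        simpa using fun c hc => hJ' hc) (fun _ => zero_lt_one)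
    · simpa only [one_mul] using key
    · intro b b' hb l hl l' hl'
      simp only [mem_filter, mem_univ, true_and] at hl hl'
      exact hl.1.trans (hl'.2 b hb).le

theorem eigenvalue_rowSumDeflation_lt {n : ℕ} {A : Matrix (Fin (n + 1)) (Fin (n + 1)) ℝ}
    (hA : ∀ i j, 0 < A i j) {c : ℝ} (hc : ∀ i, ∑ j, A i j = c) {d : ℝ} {y : Fin n → ℝ}
    (hn : 0 < n) (hy : ∀ i, 0 < y i) (h : rowSumDeflation A *ᵥ y = d • y) : d < c := by
  have : Nonempty (Fin n) := ⟨⟨0, hn⟩⟩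
  have hY : 0 < ∑ i, y i := Finset.sum_pos (fun i _ => hy i) Finset.univ_nonempty
  have hcol : ∀ j, ∑ i, rowSumDeflation A i j < c := by
    intro j
    have htel : ∑ i, rowSumDeflation A i j =
        ∑ l ∈ Iic j.castSucc, A 0 l - ∑ l ∈ Iic j.castSucc, A (Fin.last n) l := by
      have h1 := Fin.sum_univ_succ fun i => ∑ l ∈ Iic j.castSucc, A i l
      have h2 := Fin.sum_univ_castSucc fun i => ∑ l ∈ Iic j.castSucc, A i l
      simp only [rowSumDeflation, of_apply, Finset.sum_sub_distrib]
      linarith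
    have h1 : ∑ l ∈ Iic j.castSucc, A 0 l ≤ c := by
      rw [← hc 0]
      exact Finset.sum_le_sum_of_subset_of_nonneg (Finset.subset_univ _)
        fun l _ _ => (hA 0 l).le
    have h2 : 0 < ∑ l ∈ Iic j.castSucc, A (Fin.last n) l :=
      Finset.sum_pos (fun l _ => hA _ l) ⟨j.castSucc, by simp⟩
    linarith
  have hsum : d * ∑ i, y i = ∑ j, (∑ i, rowSumDeflation A i j) * y j := by
    rw [Finset.mul_sum]
    calc ∑ i, d * y i = ∑ i, (rowSumDeflation A *ᵥ y) i := by simp [h]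
      _ = _ := by
        simp only [mulVec, dotProduct, Finset.sum_mul]
        exact Finset.sum_comm
  have hlt : d * ∑ i, y i < c * ∑ i, y i := by
    rw [hsum, Finset.mul_sum]
    exact Finset.sum_lt_sum_of_nonempty Finset.univ_nonempty fun j _ =>
      mul_lt_mul_of_pos_right (hcol j) (hy j)
  exact lt_of_mul_lt_mul_right hlt hY.le

theorem ConsecutiveRowMinorsPos.charpoly_factor {n : ℕ}
    {A : Matrix (Fin (n + 1)) (Fin (n + 1)) ℝ} (hA : ConsecutiveRowMinorsPos A) {c : ℝ}
    {u : Fin (n + 1) → ℝ} (hc : 0 < c) (hu : ∀ i, 0 < u i) (h : A *ᵥ u = c • u) :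
    ∃ s : Multiset ℝ, s.Nodup ∧ (∀ x ∈ s, 0 < x ∧ x < c) ∧
      A.charpoly = (Polynomial.X - Polynomial.C c) *
        (s.map fun x => Polynomial.X - Polynomial.C x).prod := by
  induction n generalizing c with
  | zero =>
    refine ⟨0, Multiset.nodup_zero, by simp, ?_⟩
    rw [← charpoly_diagConj A hu,
      charpoly_eq_mul_charpoly_rowSumDeflation _ c (sum_diagConj hu h)]
    simp [charpoly]
  | succ n ih =>
    have hD := hA.diagConj hu
    have hsum := sum_diagConj hu h
    have hB := hD.rowSumDeflation hc hsum
    obtain ⟨d, y, hd, hy, hdy⟩ := exists_pos_eigenvector_of_pos _ hB.entry_pos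
    have hdc := eigenvalue_rowSumDeflation_lt hD.entry_pos hsum n.succ_pos hy hdy
    obtain ⟨s, hs, hsd, hchar⟩ := ih hB hd hy hdy
    refine ⟨d ::ₘ s, Multiset.nodup_cons.2 ⟨fun hmem => lt_irrefl _ (hsd d hmem).2, hs⟩, ?_, ?_⟩
    · intro x hx
      rcases Multiset.mem_cons.1 hx with rfl | hx
      · exact ⟨hd, hdc⟩
      · exact ⟨(hsd x hx).1, (hsd x hx).2.trans hdc⟩
    · rw [← charpoly_diagConj A hu, charpoly_eq_mul_charpoly_rowSumDeflation _ c hsum, hchar,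
        Multiset.map_cons, Multiset.prod_cons]

theorem ConsecutiveRowMinorsPos.exists_charpoly_eq_prod {n : ℕ}
    {A : Matrix (Fin n) (Fin n) ℝ} (hA : ConsecutiveRowMinorsPos A) :
    ∃ s : Multiset ℝ, s.Nodup ∧ (∀ x ∈ s, 0 < x) ∧
      A.charpoly = (s.map fun x => Polynomial.X - Polynomial.C x).prod := by
  cases n with
  | zero => exact ⟨0, Multiset.nodup_zero, by simp, by simp [charpoly]⟩
  | succ n =>
    obtain ⟨c, u, hc, hu, h⟩ := exists_pos_eigenvector_of_pos A hA.entry_pos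
    obtain ⟨s, hs, hsc, hchar⟩ := hA.charpoly_factor hc hu h
    refine ⟨c ::ₘ s, Multiset.nodup_cons.2 ⟨fun hmem => lt_irrefl _ (hsc c hmem).2, hs⟩, ?_, ?_⟩
    · intro x hx
      rcases Multiset.mem_cons.1 hx with rfl | hx
      · exact hc
      · exact (hsc x hx).1
    · rw [hchar, Multiset.map_cons, Multiset.prod_cons]

/-- Divided differences on the nodes `z i, …, z j`, determined by those starting at `z 0`. -/
def dividedDiff (z g : ℕ → ℝ) : ℕ → ℕ → ℝ
  | 0, j => g j
  | i + 1, j => dividedDiff z g i (j - 1) + (z j - z i) * dividedDiff z g i j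

theorem dividedDiff_self_eq_sum (z g : ℕ → ℝ) (i d : ℕ) :
    dividedDiff z g (i + d) (i + d) = ∑ k ∈ range (d + 1),
      (∏ m ∈ range k, (z (i + d) - z (i + m))) * dividedDiff z g i (i + k) := by
  induction d generalizing i with
  | zero => simp
  | succ d ih =>
    have h := ih (i + 1)
    rw [show i + 1 + d = i + (d + 1) by ring] at h
    rw [h]
    set Z := z (i + (d + 1)) with hZ
    have hstep : ∀ k, dividedDiff z g (i + 1) (i + 1 + k) = dividedDiff z g i (i + k) +
        (z (i + (k + 1)) - z i) * dividedDiff z g i (i + (k + 1)) := by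
      intro k
      rw [dividedDiff, show i + 1 + k - 1 = i + k by omega,
        show i + 1 + k = i + (k + 1) by ring]
    let Q : ℕ → ℝ := fun k => ∏ m ∈ range k, (Z - z (i + (m + 1)))
    have hQ : ∀ k, ∏ m ∈ range k, (Z - z (i + 1 + m)) = Q k := fun k =>
      Finset.prod_congr rfl fun m _ => by rw [show i + 1 + m = i + (m + 1) by ring]
    have hP : ∀ k, ∏ m ∈ range (k + 1), (Z - z (i + m)) = (Z - z i) * Q k := fun k => by
      rw [Finset.prod_range_succ', mul_comm]
      rfl
    have hQs : ∀ k, Q (k + 1) = Q k * (Z - z (i + (k + 1))) := fun k =>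
      Finset.prod_range_succ _ _
    have htop : Q (d + 1) = 0 := by rw [hQs]; simp [hZ]
    rw [Finset.sum_range_succ' _ (d + 1)]
    simp only [hQ, hP, hstep]
    have hshift : ∑ k ∈ range (d + 1), Q k * dividedDiff z g i (i + k) =
        ∑ k ∈ range (d + 1), Q (k + 1) * dividedDiff z g i (i + (k + 1)) +
          dividedDiff z g i i := by
      have h1 := Finset.sum_range_succ (fun k => Q k * dividedDiff z g i (i + k)) (d + 1)
      rw [Finset.sum_range_succ' _ (d + 1), htop] at h1
      simp only [zero_mul, add_zero] at h1
      rw [← h1]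
      simp [Q]
    simp only [mul_add, Finset.sum_add_distrib, hshift, Finset.prod_range_zero, one_mul, add_zero]
    rw [add_right_comm, ← Finset.sum_add_distrib]
    congr 1
    refine Finset.sum_congr rfl fun k _ => ?_
    rw [hQs]
    ring

theorem det_dividedDiff_pos {k : ℕ} (z : ℕ → ℝ) (hz : StrictMono z) (g : Fin k → ℕ → ℝ)
    (hg : ∀ J : Fin k → ℕ, StrictMono J → 0 < (of fun a b => g a (J b)).det) (i : ℕ)
    (J : Fin k → ℕ) (hJ : StrictMono J) :
    0 < (of fun a b => dividedDiff z (g a) (min i (J b)) (J b)).det := by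
  induction i generalizing J with
  | zero => simpa [dividedDiff] using hg J hJ
  | succ i ih =>
    have key := det_sum_pos_of_sorted_supports
      (fun a l => dividedDiff z (g a) (min i l) l) (fun f hf => ih f hf)
      (fun b => if J b ≤ i then {J b} else {J b - 1, J b})
      (fun b l => if J b ≤ i then 1 else if l = J b then z (J b) - z i else 1) ?_ ?_ J hJ ?_ ?_
    · convert key using 5 with a b
      split_ifs with hb
      · simp [min_eq_right hb, min_eq_right (hb.trans i.le_succ)]
      · rw [Finset.sum_pair (by omega), if_neg (by omega), if_pos rfl,
          min_eq_left (by omega), min_eq_left (by omega), min_eq_left (by omega), dividedDiff]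
        ring
    · intro b l _
      split_ifs with h1 h2
      · exact zero_le_one
      · exact (sub_pos.2 (hz (by omega))).le
      · exact zero_le_one
    · intro b b' hb l hl l' hl'
      have := hJ hb
      have h1 : l ≤ J b := by
        split_ifs at hl <;> simp at hl <;> omega
      have h2 : J b' - 1 ≤ l' := by
        split_ifs at hl' <;> simp at hl' <;> omega
      omega
    · intro b
      split_ifs <;> simp
    · intro b
      split_ifs with h1
      · exact zero_lt_one
      · exact sub_pos.2 (hz (by omega))
      · exact zero_lt_one

theorem prod_range_mul_succ_sub_mul_succ (m k : ℕ) (hk : k ≤ m) :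
    ∏ l ∈ range k, ((m : ℝ) * (m + 1) - l * (l + 1)) =
      (m + k).factorial / (m - k).factorial := by
  induction k with
  | zero => simp [div_self, Nat.factorial_ne_zero]
  | succ k ih =>
    rw [Finset.prod_range_succ, ih (by omega)]
    obtain ⟨d, rfl⟩ := Nat.exists_eq_add_of_le hk
    rw [show k + 1 + d - k = d + 1 by omega, show k + 1 + d - (k + 1) = d by omega,
      show k + 1 + d + (k + 1) = (k + 1 + d + k) + 1 by ring, Nat.factorial_succ d,
      Nat.factorial_succ (k + 1 + d + k)]
    push_cast
    field_simp
    ring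

theorem besselPoly_eq_dividedDiff (m : ℕ) (x : ℝ) :
    besselPoly m x = dividedDiff (fun l => (l : ℝ) * (l + 1))
      (fun k => (2 ^ k * (k.factorial : ℝ))⁻¹ * x ^ k) m m := by
  have h := dividedDiff_self_eq_sum (fun l => (l : ℝ) * (l + 1))
    (fun k => (2 ^ k * (k.factorial : ℝ))⁻¹ * x ^ k) 0 m
  simp only [zero_add] at h
  rw [h, besselPoly]
  refine Finset.sum_congr rfl fun k hk => ?_
  rw [prod_range_mul_succ_sub_mul_succ m k (by simpa [Nat.lt_succ_iff] using hk), dividedDiff]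
  field_simp

theorem det_besselPoly_pos {k : ℕ} (s : Fin k → ℝ) (hs : ∀ i, 0 < s i) (hmono : StrictMono s)
    (J : Fin k → ℕ) (hJ : StrictMono J) : 0 < (of fun a b => besselPoly (J b) (s a)).det := by
  have hz : StrictMono fun l : ℕ => (l : ℝ) * (l + 1) :=
    strictMono_nat_of_lt_succ fun l => by push_cast; nlinarith [(Nat.cast_nonneg l : (0 : ℝ) ≤ l)]
  have key := det_dividedDiff_pos _ hz
    (fun a l => (2 ^ l * (l.factorial : ℝ))⁻¹ * s a ^ l) (fun f hf => ?_)
    (∑ b, J b) J hJ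
  · convert key using 5 with a b
    rw [min_eq_right (Finset.single_le_sum (fun _ _ => Nat.zero_le _) (Finset.mem_univ b)),
      besselPoly_eq_dividedDiff]
  · have h := det_mul_row (fun b => (2 ^ f b * ((f b).factorial : ℝ))⁻¹)
      (of fun a b => s a ^ f b)
    simp only [of_apply] at h
    rw [h]
    exact mul_pos (Finset.prod_pos fun b _ => by positivity)
      (det_generalized_vandermonde_pos s hs hmono f hf)

theorem bessel_collocation_eigenvalues (n : ℕ) (t : Fin n → ℝ)
    (hpos : ∀ i, 0 < t i) (hmono : StrictMono t) :
    let M : Matrix (Fin n) (Fin n) ℝ := fun i j => besselPoly j (t i)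
    (∀ μ : ℂ, ((M.map (algebraMap ℝ ℂ)).charpoly).IsRoot μ → μ.im = 0 ∧ 0 < μ.re) ∧
      ((M.map (algebraMap ℝ ℂ)).charpoly).roots.Nodup := by
  intro M
  have hM : ConsecutiveRowMinorsPos M := fun k i r J hr hJ =>
    det_besselPoly_pos (fun a => t (r a)) (fun a => hpos _)
      (fun a b hab => hmono (Fin.lt_def.2 (by
        rw [hr, hr]
        exact Nat.add_lt_add_left hab i)))
      (fun b => J b) (fun a b hab => hJ hab)
  obtain ⟨s, hs, hspos, hchar⟩ := hM.exists_charpoly_eq_prod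
  have hC : (M.map (algebraMap ℝ ℂ)).charpoly =
      ((s.map (algebraMap ℝ ℂ)).map fun x => Polynomial.X - Polynomial.C x).prod := by
    rw [charpoly_map, hchar, Polynomial.map_multiset_prod]
    simp [Multiset.map_map]
  have hroots : (M.map (algebraMap ℝ ℂ)).charpoly.roots = s.map (algebraMap ℝ ℂ) := by
    rw [hC, Polynomial.roots_multiset_prod_X_sub_C]
  refine ⟨fun μ hμ => ?_, ?_⟩
  · have hmem := (Polynomial.mem_roots (charpoly_monic _).ne_zero).2 hμ
    rw [hroots, Multiset.mem_map] at hmem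
    obtain ⟨x, hx, rfl⟩ := hmem
    exact ⟨Complex.ofReal_im x, hspos x hx⟩
  · rw [hroots]
    exact hs.map (algebraMap ℝ ℂ).injective
end

section
/- The lower triangular matrix C with c_{ij} = (2i-j-1)!/(2^{i-j}(j-1)!(i-j)!) for i ≥ j (0 otherwise) is a nonsingular totally positive matrix, with all diagonal entries equal to (2i-2)!/(2^{i-1}(i-1)!) = (2i-3)!! ... specifically c_{ii} = 1 for all i, and all minors of C are nonnegative. -/
/-- Entries of the lower triangular reverse Bessel coefficient matrix. -/
noncomputable def revC (i j : ℕ) : ℝ :=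
  if j ≤ i then ((2 * i - j - 1).factorial : ℝ) / (2 ^ (i - j) * (j - 1).factorial * (i - j).factorial)
  else 0

/-- All minors of `A` using only the first `n` rows are nonnegative. -/
def MinorsNonneg (n : ℕ) (A : Matrix ℕ ℕ ℝ) : Prop :=
  ∀ (k : ℕ) (r c : Fin k → ℕ), StrictMono r → StrictMono c → (∀ i, r i < n) →
    0 ≤ (A.submatrix r c).det

lemma MinorsNonneg.congr {n : ℕ} {A B : Matrix ℕ ℕ ℝ} (hA : MinorsNonneg n A)
    (h : ∀ i < n, ∀ j, B i j = A i j) : MinorsNonneg n B := by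
  intro k r c hr hc hn
  have : B.submatrix r c = A.submatrix r c := by
    ext i j
    exact h _ (hn i) _
  rw [this]
  exact hA k r c hr hc hn

lemma StrictMono.update_succ {k : ℕ} {c : Fin k → ℕ} (hc : StrictMono c) (q : Fin k)
    (hq : ∀ p, c p ≠ c q + 1) : StrictMono (Function.update c q (c q + 1)) := by
  intro a b hab
  have h := hc hab
  have hb := hq b
  simp only [Function.update_apply]
  split_ifs with h₁ h₂ h₂
  · subst h₁ h₂
    exact absurd hab (lt_irrefl _)
  · subst h₁
    omega
  · subst h₂
    omega
  · exact h

/-- Adding a nonnegative multiple of a column to the preceding one preserves nonnegativity of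
minors. -/
lemma MinorsNonneg.add_succ_col {n : ℕ} {A : Matrix ℕ ℕ ℝ} (hA : MinorsNonneg n A) (m : ℕ) {a : ℝ}
    (ha : 0 ≤ a) : MinorsNonneg n (A.updateCol m fun i => A i m + a * A i (m + 1)) := by
  intro k r c hr hc hn
  by_cases hm : ∃ q, c q = m
  · obtain ⟨q, rfl⟩ := hm
    have hM : (A.updateCol (c q) fun i => A i (c q) + a * A i (c q + 1)).submatrix r c =
        (A.submatrix r c).updateCol q
          ((fun i => A.submatrix r c i q) + a • fun i => A (r i) (c q + 1)) := by
      ext i j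
      simp [Matrix.updateCol_apply, hc.injective.eq_iff]
    rw [hM, Matrix.det_updateCol_add, Matrix.det_updateCol_smul, Matrix.updateCol_eq_self]
    refine add_nonneg (hA k r c hr hc hn) (mul_nonneg ha ?_)
    by_cases hq : ∃ p, c p = c q + 1
    · obtain ⟨p, hp⟩ := hq
      have hpq : p ≠ q := by
        rintro rfl
        omega
      refine (Matrix.det_zero_of_column_eq hpq fun i => ?_).ge
      simp [hpq, hp]
    · push Not at hq
      have hU : ((A.submatrix r c).updateCol q fun i => A (r i) (c q + 1)) =
          A.submatrix r (Function.update c q (c q + 1)) := by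
        ext i j
        by_cases hj : j = q <;> simp [hj]
      rw [hU]
      exact hA k r _ hr (hc.update_succ q hq) hn
  · push Not at hm
    have hM : (A.updateCol m fun i => A i m + a * A i (m + 1)).submatrix r c =
        A.submatrix r c := by
      ext i j
      simp [hm j]
    rw [hM]
    exact hA k r c hr hc hn

/-- The block diagonal matrix with blocks `1` and `A`. -/
def oneBlock (A : Matrix ℕ ℕ ℝ) : Matrix ℕ ℕ ℝ
  | 0, 0 => 1
  | 0, _ + 1 => 0
  | _ + 1, 0 => 0
  | i + 1, j + 1 => A i j

lemma MinorsNonneg.det_oneBlock_of_pos {n : ℕ} {A : Matrix ℕ ℕ ℝ} (hA : MinorsNonneg n A) {k : ℕ}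
    {r c : Fin k → ℕ} (hr : StrictMono r) (hc : StrictMono c) (hn : ∀ i, r i < n + 1)
    (hr0 : ∀ i, 0 < r i) (hc0 : ∀ i, 0 < c i) : 0 ≤ ((oneBlock A).submatrix r c).det := by
  have hM : (oneBlock A).submatrix r c = A.submatrix (fun i => r i - 1) (fun i => c i - 1) := by
    ext i j
    obtain ⟨x, hx⟩ := Nat.exists_eq_succ_of_ne_zero (hr0 i).ne'
    obtain ⟨y, hy⟩ := Nat.exists_eq_succ_of_ne_zero (hc0 j).ne'
    simp [hx, hy, oneBlock]
  rw [hM]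
  refine hA k _ _ (fun a b hab => ?_) (fun a b hab => ?_) fun i => ?_
  · have := hr hab
    have := hr0 a
    omega
  · have := hc hab
    have := hc0 a
    omega
  · have := hn i
    have := hr0 i
    omega

lemma MinorsNonneg.oneBlock {n : ℕ} {A : Matrix ℕ ℕ ℝ} (hA : MinorsNonneg n A) :
    MinorsNonneg (n + 1) (oneBlock A) := by
  intro k r c hr hc hn
  rcases k with _ | k
  · simp
  have pos_succ {s : Fin (k + 1) → ℕ} (hs : StrictMono s) (i : Fin k) : 0 < s i.succ :=
    (Nat.zero_le _).trans_lt (hs i.succ_pos)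
  have pos_of_zero {s : Fin (k + 1) → ℕ} (hs : StrictMono s) (h : s 0 ≠ 0) (i : Fin (k + 1)) :
      0 < s i := (Nat.pos_of_ne_zero h).trans_le (hs.monotone i.zero_le)
  by_cases hr0 : r 0 = 0 <;> by_cases hc0 : c 0 = 0
  · have hrow (i : Fin k) : _root_.oneBlock A 0 (c i.succ) = 0 := by
      obtain ⟨y, hy⟩ := Nat.exists_eq_succ_of_ne_zero (pos_succ hc i).ne'
      simp [hy, _root_.oneBlock]
    rw [Matrix.det_succ_row_zero, Fin.sum_univ_succ]
    simp only [Matrix.submatrix_apply, hr0, hc0, hrow, Matrix.submatrix_submatrix]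
    simp only [_root_.oneBlock, Fin.val_zero, pow_zero, mul_one, one_mul, mul_zero, zero_mul,
      Finset.sum_const_zero, add_zero]
    exact hA.det_oneBlock_of_pos (hr.comp Fin.strictMono_succ)
      (hc.comp (Fin.strictMono_succAbove 0)) (fun i => hn _) (pos_succ hr)
      (fun i => by simpa using pos_succ hc i)
  · refine (Matrix.det_eq_zero_of_row_eq_zero 0 fun j => ?_).ge
    obtain ⟨y, hy⟩ := Nat.exists_eq_succ_of_ne_zero (pos_of_zero hc hc0 j).ne'
    simp [hr0, hy, _root_.oneBlock]
  · refine (Matrix.det_eq_zero_of_column_eq_zero 0 fun j => ?_).ge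
    obtain ⟨y, hy⟩ := Nat.exists_eq_succ_of_ne_zero (pos_of_zero hr hr0 j).ne'
    simp [hc0, hy, _root_.oneBlock]
  · exact hA.det_oneBlock_of_pos hr hc hn (pos_of_zero hr hr0) (pos_of_zero hc hc0)

/-- The infinite reverse Bessel coefficient matrix, indexed from zero. -/
noncomputable def revCMatrix : Matrix ℕ ℕ ℝ := fun i j => revC (i + 1) (j + 1)

lemma revCMatrix_add (d j : ℕ) : revCMatrix (j + d) j =
    ((2 * d + j).factorial : ℝ) / (2 ^ d * j.factorial * d.factorial) := by
  have h₁ : 2 * (j + d + 1) - (j + 1) - 1 = 2 * d + j := by omega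
  have h₂ : j + d + 1 - (j + 1) = d := by omega
  have h₃ : j + 1 ≤ j + d + 1 := by omega
  simp only [revCMatrix, revC, if_pos h₃, h₁, h₂, Nat.add_sub_cancel]

lemma revCMatrix_of_lt {i j : ℕ} (h : i < j) : revCMatrix i j = 0 := by
  have : ¬ j + 1 ≤ i + 1 := by omega
  simp only [revCMatrix, revC, if_neg this]

lemma revCMatrix_self (i : ℕ) : revCMatrix i i = 1 := by
  have := revCMatrix_add 0 i
  simpa [Nat.factorial_ne_zero] using this

lemma revCMatrix_recurrence (i j : ℕ) :
    revCMatrix i j = oneBlock revCMatrix i j + (j + 1) * revCMatrix i (j + 1) := by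
  rcases lt_trichotomy i j with h | rfl | h
  · rw [revCMatrix_of_lt h, revCMatrix_of_lt (by omega)]
    rcases i with _ | i <;> rcases j with _ | j
    · omega
    · simp [oneBlock]
    · omega
    · simp [oneBlock, revCMatrix_of_lt (show i < j by omega)]
  · rw [revCMatrix_self, revCMatrix_of_lt (Nat.lt_succ_self i)]
    rcases i with _ | i <;> simp [oneBlock, revCMatrix_self]
  · obtain ⟨d, rfl⟩ := Nat.exists_eq_add_of_lt h
    have e : j + d + 1 = j + 1 + d := by omega
    rw [add_assoc j d 1, revCMatrix_add, ← add_assoc, e, revCMatrix_add]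
    rcases j with _ | j
    · have e₁ : 2 * (d + 1) + 0 = (2 * d + 1) + 1 := by omega
      have e₂ : 2 * d + (0 + 1) = 2 * d + 1 := by omega
      have e₃ : 0 + 1 + d = d + 1 := by omega
      rw [e₁, e₂, e₃, Nat.factorial_succ (2 * d + 1), Nat.factorial_succ d]
      simp only [oneBlock]
      push_cast
      field_simp
      simp
      ring
    · have e₁ : 2 * (d + 1) + (j + 1) = (2 * d + j + 2) + 1 := by omega
      have e₂ : 2 * d + (j + 1 + 1) = 2 * d + j + 2 := by omega
      have e₃ : j + 1 + 1 + d = j + (d + 1) + 1 := by omega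
      have e₄ : 2 * (d + 1) + j = 2 * d + j + 2 := by omega
      rw [e₁, e₂, e₃]
      simp only [oneBlock]
      rw [revCMatrix_add, e₄, Nat.factorial_succ (2 * d + j + 2), Nat.factorial_succ d,
        Nat.factorial_succ (j + 1), Nat.factorial_succ j]
      push_cast
      field_simp
      ring

/-- The matrix interpolating between `oneBlock revCMatrix` and `revCMatrix`, whose columns from
`m` on are those of the latter. -/
noncomputable def revCInterp (m : ℕ) : Matrix ℕ ℕ ℝ :=
  fun i j => if m ≤ j then revCMatrix i j else oneBlock revCMatrix i j

lemma revCInterp_eq_updateCol (m : ℕ) : revCInterp m = (revCInterp (m + 1)).updateCol m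
    fun i => revCInterp (m + 1) i m + ((m : ℝ) + 1) * revCInterp (m + 1) i (m + 1) := by
  ext i j
  rcases lt_trichotomy j m with h | rfl | h
  · simp [revCInterp, h.ne, show ¬ m ≤ j by omega,
      show ¬ m + 1 ≤ j by omega]
  · simpa [revCInterp, Matrix.updateCol_apply] using revCMatrix_recurrence i j
  · simp [revCInterp, h.ne', h.le, show m + 1 ≤ j by omega]

lemma minorsNonneg_revCMatrix (n : ℕ) : MinorsNonneg n revCMatrix := by
  induction n with
  | zero =>
    intro k r c _ _ hn
    rcases k with _ | k
    · simp
    · exact absurd (hn 0) (Nat.not_lt_zero _)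
  | succ n ih =>
    have hstart : MinorsNonneg (n + 1) (revCInterp (n + 1)) := by
      refine ih.oneBlock.congr fun i hi j => ?_
      unfold revCInterp
      split_ifs with hj
      · have h := revCMatrix_recurrence i j
        rwa [revCMatrix_of_lt (show i < j + 1 by omega), mul_zero, add_zero] at h
      · rfl
    have hend : MinorsNonneg (n + 1) (revCInterp 0) :=
      Nat.decreasingInduction (motive := fun m _ => MinorsNonneg (n + 1) (revCInterp m))
        (fun m _ h => by
          rw [revCInterp_eq_updateCol]
          exact h.add_succ_col m (by positivity))
        hstart (Nat.zero_le (n + 1))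
    exact hend.congr fun i _ j => by simp [revCInterp]

theorem revC_TP_nonsingular (n : ℕ) :
    let C : Matrix (Fin n) (Fin n) ℝ := fun i j => revC (i + 1) (j + 1)
    (∀ i, C i i = 1) ∧
      (∀ (k : ℕ) (r c : Fin k → Fin n), StrictMono r → StrictMono c →
          0 ≤ (C.submatrix r c).det) ∧
      C.det ≠ 0 := by
  intro C
  have hdiag (i : Fin n) : C i i = 1 := revCMatrix_self i
  refine ⟨hdiag, fun k r c hr hc => ?_, ?_⟩
  · exact minorsNonneg_revCMatrix n k (fun i => r i) (fun i => c i) (fun _ _ h => hr h)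
      (fun _ _ h => hc h) fun i => (r i).isLt
  · have hC : C.IsLowerTriangular := fun i j hij => revCMatrix_of_lt hij
    rw [Matrix.det_of_isLowerTriangular C hC]
    simp [hdiag]
end
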